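/- For every real a > 0, the function F_a : ℝ → ℝ defined by F_a(t) = −1 for t ≤ −1/2, F_a(t) = tanh(a·tan(πt)) for −1/2 < t < 1/2, and F_a(t) = 1 for t ≥ 1/2, is infinitely differentiable on ℝ. -/

import Mathlib

/-!
Everything rests on one flat junction: `x ↦ tanh (1 / x)`, continued by `1` to `x ≤ 0`, is smooth,
because `tanh u = (1 - exp (-2u)) / (1 + exp (-2u))` writes it as a rational expression in the
smooth function `x ↦ exp (-2 / x)`, continued by `0` to `x ≤ 0`. Since `tan (π / 2 - x)` is the
inverse of `tan x`, near `t = 1 / 2` the step is the composition of this junction with the smooth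
function `t ↦ tan (π (1 / 2 - t)) / a`; the junction at `t = -1 / 2` follows by oddness.
-/

open Set Filter Topology

theorem contDiffAt_neg_of_odd {𝕜 E F : Type*} [NontriviallyNormedField 𝕜]
    [NormedAddCommGroup E] [NormedSpace 𝕜 E] [NormedAddCommGroup F] [NormedSpace 𝕜 F]
    {n : WithTop ℕ∞} {f : E → F} (hf : Function.Odd f) {x : E} (hx : ContDiffAt 𝕜 n f x) :
    ContDiffAt 𝕜 n f (-x) := by
  have neg_comp_neg : f = fun y => -f (-y) := funext fun y => by rw [hf y, neg_neg]
  rw [← neg_neg x] at hx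
  rw [neg_comp_neg]
  exact (hx.comp (-x) contDiffAt_id.neg).neg

theorem tanh_eq_one_sub_exp_div_one_add_exp (x : ℝ) :
    Real.tanh x = (1 - Real.exp (-(2 * x))) / (1 + Real.exp (-(2 * x))) := by
  have exp_neg_two_mul : Real.exp (-(2 * x)) = Real.exp (-x) * Real.exp (-x) := by
    rw [← Real.exp_add]
    ring_nf
  have exp_mul_exp_neg : Real.exp x * Real.exp (-x) = 1 := by
    rw [← Real.exp_add, add_neg_cancel, Real.exp_zero]
  rw [Real.tanh_eq, exp_neg_two_mul, div_eq_div_iff (by positivity) (by positivity)]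
  linear_combination 2 * Real.exp (-x) * exp_mul_exp_neg

theorem contDiff_tanh {n : WithTop ℕ∞} : ContDiff ℝ n Real.tanh := by
  rw [funext Real.tanh_eq_sinh_div_cosh]
  exact Real.contDiff_sinh.div Real.contDiff_cosh fun x => (Real.cosh_pos x).ne'

theorem contDiffAt_tan_pi_mul {n : WithTop ℕ∞} {t : ℝ} (ht : |t| < 1 / 2) :
    ContDiffAt ℝ n (fun s : ℝ => Real.tan (Real.pi * s)) t := by
  obtain ⟨neg_half_lt, lt_half⟩ := abs_lt.mp ht
  have cos_pos : 0 < Real.cos (Real.pi * t) :=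
    Real.cos_pos_of_mem_Ioo ⟨by nlinarith [Real.pi_pos], by nlinarith [Real.pi_pos]⟩
  exact (Real.contDiffAt_tan.mpr cos_pos.ne').comp t (contDiffAt_const.mul contDiffAt_id)

theorem tan_pi_mul_half_sub (t : ℝ) :
    Real.tan (Real.pi * (1 / 2 - t)) = (Real.tan (Real.pi * t))⁻¹ := by
  rw [← Real.tan_pi_div_two_sub]
  ring_nf

/-- The function `x ↦ tanh (1 / x)` on `x > 0`, glued at `0` to its limit `1`. It is the local model
for the flat junction of a hyperbolic tangent with a constant when its argument blows up. -/
noncomputable def tanhInvGlue (x : ℝ) : ℝ :=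
  if x ≤ 0 then 1 else Real.tanh x⁻¹

theorem tanhInvGlue_eq_expNegInvGlue_div (x : ℝ) :
    tanhInvGlue x = (1 - expNegInvGlue (x / 2)) / (1 + expNegInvGlue (x / 2)) := by
  rcases le_or_gt x 0 with hx | hx
  · rw [tanhInvGlue, if_pos hx, expNegInvGlue.zero_of_nonpos (by linarith)]
    norm_num
  · rw [tanhInvGlue, if_neg hx.not_ge, expNegInvGlue, if_neg (half_pos hx).not_ge,
      tanh_eq_one_sub_exp_div_one_add_exp, inv_div, div_eq_mul_inv 2 x]

theorem contDiff_tanhInvGlue {n : ℕ∞} : ContDiff ℝ n tanhInvGlue := by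
  have contDiff_glue : ContDiff ℝ n fun x : ℝ => expNegInvGlue (x / 2) :=
    expNegInvGlue.contDiff.comp (contDiff_id.div_const 2)
  rw [funext tanhInvGlue_eq_expNegInvGlue_div]
  exact (contDiff_const.sub contDiff_glue).div (contDiff_const.add contDiff_glue)
    fun x => (add_pos_of_pos_of_nonneg one_pos (expNegInvGlue.nonneg _)).ne'

/-- The connecting function `t ↦ tanh (a tan (π t))` on `(-1/2, 1/2)`, glued to the constants `-1`
on the left and `1` on the right. -/
noncomputable def tanhTanStep (a t : ℝ) : ℝ :=
  if t ≤ -(1 / 2 : ℝ) then (-1 : ℝ)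
  else if t < (1 / 2 : ℝ) then Real.tanh (a * Real.tan (Real.pi * t))
  else 1

section

variable {a t : ℝ}

theorem tanhTanStep_of_abs_lt (ht : |t| < 1 / 2) :
    tanhTanStep a t = Real.tanh (a * Real.tan (Real.pi * t)) := by
  obtain ⟨neg_half_lt, lt_half⟩ := abs_lt.mp ht
  rw [tanhTanStep, if_neg neg_half_lt.not_ge, if_pos lt_half]

theorem tanhTanStep_of_half_le (ht : 1 / 2 ≤ t) : tanhTanStep a t = 1 := by
  rw [tanhTanStep, if_neg (by linarith), if_neg ht.not_gt]

theorem tanhTanStep_of_le_neg_half (ht : t ≤ -(1 / 2)) : tanhTanStep a t = -1 :=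
  if_pos ht

theorem odd_tanhTanStep (a : ℝ) : Function.Odd (tanhTanStep a) := by
  intro t
  rcases lt_or_ge |t| (1 / 2) with ht | ht
  · rw [tanhTanStep_of_abs_lt ht, tanhTanStep_of_abs_lt (by rwa [abs_neg]), mul_neg, Real.tan_neg,
      mul_neg, Real.tanh_neg]
  rcases le_abs.mp ht with half_le | half_le_neg
  · rw [tanhTanStep_of_half_le half_le, tanhTanStep_of_le_neg_half (neg_le_neg half_le)]
  · rw [tanhTanStep_of_half_le half_le_neg,
      tanhTanStep_of_le_neg_half (le_neg_of_le_neg half_le_neg), neg_neg]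

theorem tanhTanStep_eq_tanhInvGlue (ha : 0 < a) (ht : t ∈ Ioo 0 1) :
    tanhTanStep a t = tanhInvGlue (Real.tan (Real.pi * (1 / 2 - t)) / a) := by
  have pi_pos := Real.pi_pos
  rcases lt_or_ge t (1 / 2) with lt_half | half_le
  · have tan_pos : 0 < Real.tan (Real.pi * (1 / 2 - t)) :=
      Real.tan_pos_of_pos_of_lt_pi_div_two (by nlinarith) (by nlinarith [ht.1])
    rw [tanhTanStep_of_abs_lt (abs_lt.mpr ⟨by linarith [ht.1], lt_half⟩), tanhInvGlue,
      if_neg (div_pos tan_pos ha).not_ge, inv_div, tan_pi_mul_half_sub, div_inv_eq_mul]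
  · have tan_nonpos : Real.tan (Real.pi * (1 / 2 - t)) ≤ 0 :=
      Real.tan_nonpos_of_nonpos_of_neg_pi_div_two_le (by nlinarith) (by nlinarith [ht.2])
    rw [tanhTanStep_of_half_le half_le, tanhInvGlue,
      if_pos (div_nonpos_of_nonpos_of_nonneg tan_nonpos ha.le)]

theorem contDiffAt_tanhTanStep_of_abs_lt {n : WithTop ℕ∞} (ht : |t| < 1 / 2) :
    ContDiffAt ℝ n (tanhTanStep a) t := by
  have eventually_abs_lt : ∀ᶠ s in 𝓝 t, |s| < 1 / 2 :=
    continuous_abs.continuousAt.eventually_lt_const ht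
  exact (contDiff_tanh.contDiffAt.comp t
    (contDiffAt_const.mul (contDiffAt_tan_pi_mul ht))).congr_of_eventuallyEq
      (eventually_abs_lt.mono fun _ => tanhTanStep_of_abs_lt)

theorem contDiffAt_tanhTanStep_of_mem_Ioo {n : ℕ∞} (ha : 0 < a) (ht : t ∈ Ioo 0 1) :
    ContDiffAt ℝ n (tanhTanStep a) t := by
  have abs_half_sub_lt : |1 / 2 - t| < 1 / 2 :=
    abs_lt.mpr ⟨by linarith [ht.2], by linarith [ht.1]⟩
  have contDiffAt_tan : ContDiffAt ℝ n (fun s => Real.tan (Real.pi * (1 / 2 - s)) / a) t :=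
    ((contDiffAt_tan_pi_mul abs_half_sub_lt).comp t
      (contDiffAt_const.sub contDiffAt_id)).div_const a
  exact (contDiff_tanhInvGlue.contDiffAt.comp t contDiffAt_tan).congr_of_eventuallyEq
    (mem_of_superset (isOpen_Ioo.mem_nhds ht) fun _ => tanhTanStep_eq_tanhInvGlue ha)

theorem contDiffAt_tanhTanStep_of_half_lt {n : WithTop ℕ∞} (ht : 1 / 2 < t) :
    ContDiffAt ℝ n (tanhTanStep a) t :=
  contDiffAt_const.congr_of_eventuallyEq
    ((eventually_gt_nhds ht).mono fun _ hs => tanhTanStep_of_half_le hs.le)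

theorem contDiffAt_tanhTanStep_of_half_le {n : ℕ∞} (ha : 0 < a) (ht : 1 / 2 ≤ t) :
    ContDiffAt ℝ n (tanhTanStep a) t := by
  rcases ht.eq_or_lt with rfl | half_lt
  · exact contDiffAt_tanhTanStep_of_mem_Ioo ha (by norm_num)
  · exact contDiffAt_tanhTanStep_of_half_lt half_lt

end

/-- for every `a > 0`, the function equal to `−1` for `t ≤ −1/2`,
to `tanh(a·tan(πt))` for `−1/2 < t < 1/2`, and to `1` for `t ≥ 1/2`, is
infinitely differentiable on `ℝ`. -/
theorem stmt5 (a : ℝ) (ha : 0 < a) :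
    ContDiff ℝ (⊤ : ℕ∞) (fun t : ℝ =>
      if t ≤ -(1 / 2 : ℝ) then (-1 : ℝ)
      else if t < (1 / 2 : ℝ) then Real.tanh (a * Real.tan (Real.pi * t))
      else 1) := by
  change ContDiff ℝ (⊤ : ℕ∞) (tanhTanStep a)
  refine contDiff_iff_contDiffAt.mpr fun t => ?_
  rcases lt_or_ge |t| (1 / 2) with abs_lt_half | half_le_abs
  · exact contDiffAt_tanhTanStep_of_abs_lt abs_lt_half
  rcases le_abs.mp half_le_abs with half_le | half_le_neg
  · exact contDiffAt_tanhTanStep_of_half_le ha half_le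
  · rw [← neg_neg t]
    exact contDiffAt_neg_of_odd (odd_tanhTanStep a)
      (contDiffAt_tanhTanStep_of_half_le ha half_le_neg)
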